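/- Fix δ > 0. There exists a constant C > 0 depending only on δ such that the following holds. Let m, ℓ be integers with ℓ = m+1, let p satisfy pm ∈ [1+δ, δ^{−1}] and let τ satisfy τm ∈ [√(log m)/2, 2√(log m)]. Let M be an m×ℓ random matrix with independent {0,1}-entries such that M_{ij} ∼ Ber(p) for j ∈ [m] and M_{iℓ} ∼ Ber(τ). Then for every integer k with 0 ≤ k ≤ (log m)^{1/3}, the expected number of subsets S ⊆ [ℓ] of size k+1 with ℓ ∈ S and |U(S)| = 0 is at most C·exp(−(log m)^{1/2}/16). -/

import Mathlib

open MeasureTheory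

/-- The Bernoulli measure on `ℝ`, putting mass `p` at `1` and mass `1 - p` at `0`. -/
noncomputable def bernoulliR (p : ℝ) : Measure ℝ :=
  ENNReal.ofReal p • Measure.dirac 1 + ENNReal.ofReal (1 - p) • Measure.dirac 0

/-- The law of an `m × (m+1)` matrix with independent entries: `Ber(p)` in the first `m`
columns and `Ber(τ)` in the last column. -/
noncomputable def lawLastColumn (m : ℕ) (p τ : ℝ) : Measure (Fin m → Fin (m + 1) → ℝ) :=
  Measure.pi fun _ => Measure.pi fun j =>
    if (j : ℕ) < m then bernoulliR p else bernoulliR τ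

/-- The set of unique neighbours `U(S)` of a set `S` of columns of an `m × l` matrix. -/
def uniqueNbrSet {m l : ℕ} (M : Matrix (Fin m) (Fin l) ℝ) (S : Finset (Fin l)) :
    Set (Fin m) :=
  {i | ((∃ j ∈ S, (j : ℕ) = (i : ℕ)) ∧ ∀ j ∈ S, M i j = 0) ∨
       ((¬ ∃ j ∈ S, (j : ℕ) = (i : ℕ)) ∧ {j : Fin l | j ∈ S ∧ M i j = 1}.ncard = 1)}


/-!
Take a union bound over the `k` columns `T` chosen next to the last one; for fixed `T` the rows are
independent. A row indexed by `T` has a nonzero entry in the chosen columns with probability at most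
`k p + τ`; any other row has a `1` in the last column and in no other chosen one with probability
`τ (1 - p) ^ k`. Hence the expectation is at most
`m.choose k * (k p + τ) ^ k * (1 - τ (1 - p) ^ k) ^ (m - k)`. The first two factors give at most
`4 ^ k * exp ((k p m + τ m) / 4)`. If `k (16 + 2 p m) ≤ τ m`, then the last one is at most
`exp (-τ m / 2)` and the product at most `exp (-τ m / 8)`. This condition holds for large `m` when
`p m` is bounded and `k` is negligible compared to `τ m`; the constant `C` absorbs the finitely many
remaining `m`.
-/

open Filter Asymptotics

section BernoulliMeasure

instance isFiniteMeasure_bernoulliR (p : ℝ) : IsFiniteMeasure (bernoulliR p) :=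
  ⟨by simp [bernoulliR]⟩

lemma bernoulliR_real_univ {p : ℝ} (hp : 0 ≤ p) : (bernoulliR p).real Set.univ = max 1 p := by
  have hadd : p + max (1 - p) 0 = max 1 p := by rw [← max_add_add_left]; simp
  simp [measureReal_def, bernoulliR, ENNReal.toReal_add, ENNReal.toReal_ofReal', hp, hadd]

lemma isProbabilityMeasure_bernoulliR {p : ℝ} (hp : p ∈ Set.Icc 0 1) :
    IsProbabilityMeasure (bernoulliR p) :=
  isProbabilityMeasure_iff_real.2 <| by rw [bernoulliR_real_univ hp.1, max_eq_left hp.2]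

lemma bernoulliR_real_singleton_one {p : ℝ} (hp : 0 ≤ p) : (bernoulliR p).real {1} = p := by
  simp [measureReal_def, bernoulliR, hp]

lemma bernoulliR_real_singleton_zero {p : ℝ} (hp : p ≤ 1) :
    (bernoulliR p).real {0} = 1 - p := by
  simp [measureReal_def, bernoulliR, hp]

lemma bernoulliR_real_compl_singleton_zero {p : ℝ} (hp : 0 ≤ p) :
    (bernoulliR p).real {0}ᶜ = p := by
  simp [measureReal_def, bernoulliR, hp]

end BernoulliMeasure

section BernoulliVector

lemma measureReal_pi_univ_pi {ι : Type*} [Fintype ι] {α : ι → Type*}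
    [∀ i, MeasurableSpace (α i)] (μ : ∀ i, Measure (α i)) [∀ i, SigmaFinite (μ i)]
    (s : ∀ i, Set (α i)) :
    (Measure.pi μ).real (Set.univ.pi s) = ∏ i, (μ i).real (s i) := by
  simp only [measureReal_def, Measure.pi_pi, ENNReal.toReal_prod]

variable {ι : Type*} [Fintype ι] {w : ι → ℝ}

/-- The law of a vector with independent entries, the `j`-th one being `Ber(w j)`. -/
noncomputable def bernoulliVector (w : ι → ℝ) : Measure (ι → ℝ) :=
  Measure.pi fun j => bernoulliR (w j)

instance isFiniteMeasure_bernoulliVector (w : ι → ℝ) : IsFiniteMeasure (bernoulliVector w) := by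
  unfold bernoulliVector; infer_instance

lemma isProbabilityMeasure_bernoulliVector (hw : ∀ j, w j ∈ Set.Icc 0 1) :
    IsProbabilityMeasure (bernoulliVector w) := by
  have (j : ι) := isProbabilityMeasure_bernoulliR (hw j)
  unfold bernoulliVector; infer_instance

lemma bernoulliVector_real_univ (hw : ∀ j, 0 ≤ w j) :
    (bernoulliVector w).real Set.univ = ∏ j, max 1 (w j) := by
  rw [← Set.pi_univ Set.univ, bernoulliVector, measureReal_pi_univ_pi]
  exact Finset.prod_congr rfl fun j _ => bernoulliR_real_univ (hw j)

lemma bernoulliVector_real_ne_zero (hw : ∀ j, w j ∈ Set.Icc 0 1) (j : ι) :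
    (bernoulliVector w).real {r | r j ≠ 0} = w j := by
  have (j : ι) := isProbabilityMeasure_bernoulliR (hw j)
  have hpre : {r : ι → ℝ | r j ≠ 0} = Function.eval j ⁻¹' {0}ᶜ := rfl
  rw [hpre, bernoulliVector,
    (measurePreserving_eval (fun j => bernoulliR (w j)) j).measureReal_preimage
      (measurableSet_singleton (0 : ℝ)).compl.nullMeasurableSet,
    bernoulliR_real_compl_singleton_zero (hw j).1]

lemma bernoulliVector_real_exists_ne_zero_le (hw : ∀ j, w j ∈ Set.Icc 0 1) (S : Finset ι) :
    (bernoulliVector w).real {r | ∃ j ∈ S, r j ≠ 0} ≤ ∑ j ∈ S, w j :=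
  calc (bernoulliVector w).real {r | ∃ j ∈ S, r j ≠ 0}
      = (bernoulliVector w).real (⋃ j ∈ S, {r | r j ≠ 0}) := by
        congr 1; ext r; simp
    _ ≤ ∑ j ∈ S, (bernoulliVector w).real {r | r j ≠ 0} := measureReal_biUnion_finset_le _ _
    _ = ∑ j ∈ S, w j := Finset.sum_congr rfl fun j _ => bernoulliVector_real_ne_zero hw j

lemma bernoulliVector_real_eq_one_and_forall_eq_zero
    (hw : ∀ j, w j ∈ Set.Icc 0 1) {j₀ : ι} {T : Finset ι} (hj₀ : j₀ ∉ T) :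
    (bernoulliVector w).real {r | r j₀ = 1 ∧ ∀ j ∈ T, r j = 0} =
      w j₀ * ∏ j ∈ T, (1 - w j) := by
  classical
  have (j : ι) := isProbabilityMeasure_bernoulliR (hw j)
  let s (j : ι) : Set ℝ := if j = j₀ then {1} else if j ∈ T then {0} else Set.univ
  have hbox : {r : ι → ℝ | r j₀ = 1 ∧ ∀ j ∈ T, r j = 0} = Set.univ.pi s := by
    ext r
    simp only [s, Set.mem_ofPred_eq, Set.mem_univ_pi]
    grind
  have hs_of_mem : ∀ j ∈ T, (bernoulliR (w j)).real (s j) = 1 - w j := fun j hj => by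
    have hne : j ≠ j₀ := fun h => hj₀ (h ▸ hj)
    simp [s, hne, hj, bernoulliR_real_singleton_zero (hw j).2]
  have hs_of_notMem : ∀ j ∉ insert j₀ T, (bernoulliR (w j)).real (s j) = 1 := fun j hj => by
    rw [Finset.mem_insert, not_or] at hj
    simp [s, hj.1, hj.2]
  rw [hbox, bernoulliVector, measureReal_pi_univ_pi,
    ← Finset.prod_subset (Finset.subset_univ (insert j₀ T)) fun j _ => hs_of_notMem j,
    Finset.prod_insert hj₀, Finset.prod_congr rfl hs_of_mem]
  simp [s, bernoulliR_real_singleton_one (hw j₀).1]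

end BernoulliVector

section BlockedRows

variable {m l : ℕ} {S : Finset (Fin l)} {j₀ : Fin l} {w : Fin l → ℝ}

/-- The event, on the values of row `i`, to which the failure of `i` to be a unique neighbour of
`S ∋ j₀` is relaxed: for `i` outside `S`, unique neighbours through columns other than `j₀` are
ignored, so that the complement is a box. -/
def blockedRows (S : Finset (Fin l)) (j₀ : Fin l) (i : Fin m) : Set (Fin l → ℝ) :=
  if ∃ j ∈ S, (j : ℕ) = i then {r | ∃ j ∈ S, r j ≠ 0}
  else {r | r j₀ = 1 ∧ ∀ j ∈ S.erase j₀, r j = 0}ᶜ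

lemma mem_blockedRows_of_notMem_uniqueNbrSet {M : Matrix (Fin m) (Fin l) ℝ} (hj₀ : j₀ ∈ S)
    {i : Fin m} (hi : i ∉ uniqueNbrSet M S) : M i ∈ blockedRows S j₀ i := by
  simp only [uniqueNbrSet, Set.mem_ofPred_eq, not_or, not_and] at hi
  unfold blockedRows
  split_ifs with hiS
  · simpa using hi.1 hiS
  · rintro ⟨hone, hzero⟩
    refine hi.2 hiS (Set.ncard_eq_one.2 ⟨j₀, Set.ext fun j => ⟨fun hj => ?_, ?_⟩⟩)
    · by_contra hne
      exact zero_ne_one ((hzero j (Finset.mem_erase.2 ⟨hne, hj.1⟩)).symm.trans hj.2)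
    · rintro rfl
      exact ⟨hj₀, hone⟩

lemma measurableSet_eq_one_and_forall_eq_zero (j₀ : Fin l) (T : Finset (Fin l)) :
    MeasurableSet {r : Fin l → ℝ | r j₀ = 1 ∧ ∀ j ∈ T, r j = 0} := by
  measurability

lemma measurableSet_blockedRows (i : Fin m) : MeasurableSet (blockedRows S j₀ i) := by
  unfold blockedRows
  split_ifs
  · measurability
  · exact (measurableSet_eq_one_and_forall_eq_zero _ _).compl

lemma bernoulliVector_real_blockedRows_le (hw : ∀ j, w j ∈ Set.Icc 0 1) (i : Fin m) :
    (bernoulliVector w).real (blockedRows S j₀ i) ≤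
      if ∃ j ∈ S, (j : ℕ) = i then ∑ j ∈ S, w j
      else 1 - w j₀ * ∏ j ∈ S.erase j₀, (1 - w j) := by
  have := isProbabilityMeasure_bernoulliVector hw
  unfold blockedRows
  split_ifs
  · exact bernoulliVector_real_exists_ne_zero_le hw S
  · rw [probReal_compl_eq_one_sub (measurableSet_eq_one_and_forall_eq_zero _ _),
      bernoulliVector_real_eq_one_and_forall_eq_zero hw (Finset.notMem_erase j₀ S)]

lemma pi_bernoulliVector_real_blockedRows_le (hw : ∀ j, w j ∈ Set.Icc 0 1) :
    (Measure.pi fun _ : Fin m => bernoulliVector w).real (Set.univ.pi (blockedRows S j₀)) ≤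
      (∑ j ∈ S, w j) ^ {i : Fin m | ∃ j ∈ S, (j : ℕ) = i}.ncard *
        (1 - w j₀ * ∏ j ∈ S.erase j₀, (1 - w j)) ^
          (m - {i : Fin m | ∃ j ∈ S, (j : ℕ) = i}.ncard) := by
  rw [measureReal_pi_univ_pi]
  refine (Finset.prod_le_prod (fun _ _ => measureReal_nonneg)
    fun i _ => bernoulliVector_real_blockedRows_le hw i).trans_eq ?_
  rw [Finset.prod_ite, Finset.prod_const, Finset.prod_const, ← Finset.compl_filter,
    Finset.card_compl, Fintype.card_fin, Set.ncard_eq_toFinset_card', Set.toFinset_ofPred]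

end BlockedRows

section LastColumn

variable {m k : ℕ} {p τ : ℝ}

/-- The Bernoulli parameters of the columns: `p` for the first `m` of them, `τ` for the last. -/
def columnParam (m : ℕ) (p τ : ℝ) : Fin (m + 1) → ℝ :=
  Fin.snoc (fun _ => p) τ

@[simp]
lemma columnParam_castSucc (i : Fin m) : columnParam m p τ i.castSucc = p := by
  simp [columnParam]

@[simp]
lemma columnParam_last : columnParam m p τ (Fin.last m) = τ := by
  simp [columnParam]

lemma columnParam_mem {s : Set ℝ} (hp : p ∈ s) (hτ : τ ∈ s) (j : Fin (m + 1)) :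
    columnParam m p τ j ∈ s := by
  cases j using Fin.lastCases <;> simpa

lemma lawLastColumn_eq_pi (m : ℕ) (p τ : ℝ) :
    lawLastColumn m p τ = Measure.pi fun _ => bernoulliVector (columnParam m p τ) := by
  unfold lawLastColumn bernoulliVector
  congr! with _ j
  cases j using Fin.lastCases <;> simp

instance isFiniteMeasure_lawLastColumn : IsFiniteMeasure (lawLastColumn m p τ) := by
  rw [lawLastColumn_eq_pi]; infer_instance

lemma lawLastColumn_real_univ (hp : 0 ≤ p) (hτ : 0 ≤ τ) :
    (lawLastColumn m p τ).real Set.univ = (max 1 p ^ m * max 1 τ) ^ m := by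
  rw [lawLastColumn_eq_pi, ← Set.pi_univ Set.univ, measureReal_pi_univ_pi]
  simp [bernoulliVector_real_univ (columnParam_mem (s := Set.Ici 0) hp hτ), Fin.prod_univ_castSucc]

/-- The set of columns formed by the last column and by `T`, a set of other columns; every set of
columns containing the last one has this form. -/
def insertLast (T : Finset (Fin m)) : Finset (Fin (m + 1)) :=
  insert (Fin.last m) (T.map Fin.castSuccEmb)

lemma last_notMem_map_castSuccEmb (T : Finset (Fin m)) :
    Fin.last m ∉ T.map Fin.castSuccEmb := by
  simp [Fin.castSucc_ne_last]

lemma last_mem_insertLast (T : Finset (Fin m)) : Fin.last m ∈ insertLast T :=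
  Finset.mem_insert_self _ _

lemma erase_last_insertLast (T : Finset (Fin m)) :
    (insertLast T).erase (Fin.last m) = T.map Fin.castSuccEmb :=
  Finset.erase_insert (last_notMem_map_castSuccEmb T)

lemma card_insertLast (T : Finset (Fin m)) : (insertLast T).card = T.card + 1 := by
  rw [insertLast, Finset.card_insert_of_notMem (last_notMem_map_castSuccEmb T), Finset.card_map]

lemma exists_insertLast_eq {S : Finset (Fin (m + 1))} (hS : Fin.last m ∈ S) :
    ∃ T, insertLast T = S := by
  refine ⟨Finset.univ.filter fun i => i.castSucc ∈ S, Finset.ext fun j => ?_⟩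
  cases j using Fin.lastCases <;> simp [insertLast, hS, Fin.castSucc_ne_last]

lemma setOf_val_mem_insertLast (T : Finset (Fin m)) :
    {i : Fin m | ∃ j ∈ insertLast T, (j : ℕ) = i} = T := by
  ext i
  simp [insertLast, Fin.val_inj, i.isLt.ne']

lemma lawLastColumn_real_blockedRows_le (hp : p ∈ Set.Icc 0 1) (hτ : τ ∈ Set.Icc 0 1)
    (T : Finset (Fin m)) :
    (lawLastColumn m p τ).real (Set.univ.pi (blockedRows (insertLast T) (Fin.last m))) ≤
      (T.card * p + τ) ^ T.card * (1 - τ * (1 - p) ^ T.card) ^ (m - T.card) := by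
  rw [lawLastColumn_eq_pi]
  refine (pi_bernoulliVector_real_blockedRows_le (columnParam_mem hp hτ)).trans_eq ?_
  rw [setOf_val_mem_insertLast, Set.ncard_coe_finset, erase_last_insertLast,
    ← Finset.add_sum_erase _ _ (last_mem_insertLast T), erase_last_insertLast]
  simp [add_comm]

/-- The sets of `k + 1` columns which contain the last one and have no unique neighbour. Their
expected number is the quantity to be bounded. -/
def exceptionalSets (M : Matrix (Fin m) (Fin (m + 1)) ℝ) (k : ℕ) : Set (Finset (Fin (m + 1))) :=
  {S | S.card = k + 1 ∧ Fin.last m ∈ S ∧ (uniqueNbrSet M S).ncard = 0}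

lemma ncard_exceptionalSets_le_two_pow (M : Matrix (Fin m) (Fin (m + 1)) ℝ) (k : ℕ) :
    (exceptionalSets M k).ncard ≤ 2 ^ (m + 1) := by
  simpa using Set.ncard_le_card (exceptionalSets M k)

lemma ncard_exceptionalSets_le_sum_indicator (M : Fin m → Fin (m + 1) → ℝ) (k : ℕ) :
    ((exceptionalSets (Matrix.of M) k).ncard : ℝ) ≤
      ∑ T ∈ Finset.univ.powersetCard k,
        (Set.univ.pi (blockedRows (insertLast T) (Fin.last m))).indicator (fun _ => (1 : ℝ)) M := by
  classical
  let F : Finset (Finset (Fin m)) := {T ∈ Finset.univ.powersetCard k |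
    M ∈ Set.univ.pi (blockedRows (insertLast T) (Fin.last m))}
  have hsub : exceptionalSets (Matrix.of M) k ⊆ F.image insertLast := by
    rintro S ⟨hcard, hlast, hnone⟩
    obtain ⟨T, rfl⟩ := exists_insertLast_eq hlast
    rw [Set.ncard_eq_zero] at hnone
    refine Finset.mem_image_of_mem _ (Finset.mem_filter.2 ⟨?_, fun i _ => ?_⟩)
    · simpa [card_insertLast] using hcard
    · exact mem_blockedRows_of_notMem_uniqueNbrSet hlast (hnone ▸ Set.notMem_empty i)
  calc ((exceptionalSets (Matrix.of M) k).ncard : ℝ) ≤ F.card := by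
        exact_mod_cast (Set.ncard_le_ncard hsub).trans
          ((Set.ncard_coe_finset _).trans_le Finset.card_image_le)
    _ = _ := by
        simp only [F, Finset.card_filter, Set.indicator_apply, Nat.cast_sum, Nat.cast_ite,
          Nat.cast_one, Nat.cast_zero]

lemma integral_ncard_exceptionalSets_le_choose_mul (hp : p ∈ Set.Icc 0 1)
    (hτ : τ ∈ Set.Icc 0 1) (k : ℕ) :
    ∫ M, ((exceptionalSets (Matrix.of M) k).ncard : ℝ) ∂(lawLastColumn m p τ) ≤
      m.choose k * ((k * p + τ) ^ k * (1 - τ * (1 - p) ^ k) ^ (m - k)) := by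
  let A (T : Finset (Fin m)) : Set (Fin m → Fin (m + 1) → ℝ) :=
    Set.univ.pi (blockedRows (insertLast T) (Fin.last m))
  have hA (T : Finset (Fin m)) : MeasurableSet (A T) :=
    MeasurableSet.univ_pi measurableSet_blockedRows
  have hint (T : Finset (Fin m)) :
      Integrable ((A T).indicator fun _ => (1 : ℝ)) (lawLastColumn m p τ) :=
    (integrable_const 1).indicator (hA T)
  -- `integral_mono_of_nonneg` asks for the integrability of the majorant only.
  calc ∫ M, ((exceptionalSets (Matrix.of M) k).ncard : ℝ) ∂(lawLastColumn m p τ)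
      ≤ ∫ M, ∑ T ∈ Finset.univ.powersetCard k, (A T).indicator (fun _ => (1 : ℝ)) M
          ∂(lawLastColumn m p τ) :=
        integral_mono_of_nonneg (ae_of_all _ fun M => Nat.cast_nonneg _)
          (integrable_finsetSum _ fun T _ => hint T)
          (ae_of_all _ fun M => ncard_exceptionalSets_le_sum_indicator M k)
    _ = ∑ T ∈ Finset.univ.powersetCard k, (lawLastColumn m p τ).real (A T) := by
        rw [integral_finsetSum _ fun T _ => hint T]
        simp only [integral_indicator_const _ (hA _), smul_eq_mul, mul_one]
    _ ≤ (Finset.univ.powersetCard k : Finset (Finset (Fin m))).card •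
          ((k * p + τ) ^ k * (1 - τ * (1 - p) ^ k) ^ (m - k)) := by
        refine Finset.sum_le_card_nsmul _ _ _ fun T hT => ?_
        rw [← (Finset.mem_powersetCard.1 hT).2]
        exact lawLastColumn_real_blockedRows_le hp hτ T
    _ = m.choose k * ((k * p + τ) ^ k * (1 - τ * (1 - p) ^ k) ^ (m - k)) := by
        rw [Finset.card_powersetCard, Finset.card_fin, nsmul_eq_mul]

-- For `m < K` the parameter `p` may exceed `1`, and `bernoulliR p` then has mass `p`.
lemma integral_ncard_exceptionalSets_le_two_pow_mul {K : ℝ} (hp : p * m ∈ Set.Icc 0 K)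
    (hτ : τ * m ∈ Set.Icc 0 (m : ℝ)) (k : ℕ) :
    ∫ M, ((exceptionalSets (Matrix.of M) k).ncard : ℝ) ∂(lawLastColumn m p τ) ≤
      2 ^ (m + 1) * (max 1 K ^ m) ^ m := by
  have hmass : (lawLastColumn m p τ).real Set.univ ≤ (max 1 K ^ m) ^ m := by
    rcases m.eq_zero_or_pos with rfl | hm
    · simp [measureReal_def, lawLastColumn]
    have hm1 : (1 : ℝ) ≤ m := by exact_mod_cast hm
    have hm0 : (0 : ℝ) < m := by exact_mod_cast hm
    have hp0 : 0 ≤ p := nonneg_of_mul_nonneg_left hp.1 hm0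
    have hτ0 : 0 ≤ τ := nonneg_of_mul_nonneg_left hτ.1 hm0
    have hτ1 : τ ≤ 1 := (mul_le_iff_le_one_left hm0).1 hτ.2
    have hpK : p ≤ K := (le_mul_of_one_le_right hp0 hm1).trans hp.2
    rw [lawLastColumn_real_univ hp0 hτ0, max_eq_left hτ1, mul_one]
    gcongr
  calc ∫ M, ((exceptionalSets (Matrix.of M) k).ncard : ℝ) ∂(lawLastColumn m p τ)
      ≤ ∫ _, (2 : ℝ) ^ (m + 1) ∂(lawLastColumn m p τ) :=
        integral_mono_of_nonneg (ae_of_all _ fun M => Nat.cast_nonneg _) (integrable_const _)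
          (ae_of_all _ fun M => by
            dsimp only; exact_mod_cast ncard_exceptionalSets_le_two_pow (Matrix.of M) k)
    _ = 2 ^ (m + 1) * (lawLastColumn m p τ).real Set.univ := by
        rw [integral_const, smul_eq_mul, mul_comm]
    _ ≤ 2 ^ (m + 1) * (max 1 K ^ m) ^ m := by gcongr

end LastColumn

section Estimates

lemma choose_mul_pow_le_pow_mul_exp (m k : ℕ) {y c : ℝ} (hy : 0 ≤ y) (hc : 0 < c) :
    m.choose k * y ^ k ≤ c ^ k * Real.exp (m * y / c) :=
  calc m.choose k * y ^ k ≤ (m : ℝ) ^ k / k.factorial * y ^ k := by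
        gcongr; exact Nat.choose_le_pow_div k m
    _ = c ^ k * ((m * y / c) ^ k / k.factorial) := by
        rw [div_pow, mul_pow]; field_simp
    _ ≤ c ^ k * Real.exp (m * y / c) := by
        gcongr; exact Real.pow_div_factorial_le_exp _ (by positivity) k

lemma one_sub_pow_le_exp_neg_mul {q : ℝ} (hq : q ≤ 1) (n : ℕ) :
    (1 - q) ^ n ≤ Real.exp (-(n * q)) :=
  calc (1 - q) ^ n ≤ Real.exp (-q) ^ n :=
        pow_le_pow_left₀ (sub_nonneg.2 hq) (Real.one_sub_le_exp_neg q) n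
    _ = Real.exp (-(n * q)) := by rw [← Real.exp_nat_mul, mul_neg]

lemma four_le_exp_two : (4 : ℝ) ≤ Real.exp 2 := by
  have hsq : Real.exp 2 = Real.exp 1 ^ 2 := by rw [← Real.exp_nat_mul]; norm_num
  rw [hsq]
  nlinarith [Real.add_one_le_exp (1 : ℝ)]

lemma two_mul_sqrt_log_le (m : ℕ) : 2 * √(Real.log m) ≤ m := by
  rcases m.eq_zero_or_pos with rfl | hm
  · simp
  have hlog : Real.log m ≤ m - 1 := Real.log_le_sub_one_of_pos (by exact_mod_cast hm)
  have hsq : √(Real.log m) ^ 2 = Real.log m := Real.sq_sqrt (Real.log_natCast_nonneg m)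
  nlinarith [sq_nonneg (√(Real.log m) - 1)]

lemma half_mul_le_sub_mul_one_sub_pow {m k : ℕ} {p τ : ℝ} (hp : p ∈ Set.Icc 0 1)
    (hτ : τ ∈ Set.Icc 0 1) (hk : 2 * k * (8 + p * m) ≤ τ * m) :
    τ * m / 2 ≤ ((m - k : ℕ) : ℝ) * (τ * (1 - p) ^ k) := by
  obtain ⟨hp0, hp1⟩ := hp
  obtain ⟨hτ0, hτ1⟩ := hτ
  have hkpm0 : 0 ≤ k * p * m := by positivity
  have hτm : τ * m ≤ m := mul_le_of_le_one_left m.cast_nonneg hτ1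
  have hkm : (k : ℝ) ≤ m := by linarith [m.cast_nonneg (α := ℝ), k.cast_nonneg (α := ℝ)]
  have hhalf : k + k * p * m ≤ m / 2 := by linarith [k.cast_nonneg (α := ℝ)]
  have hbernoulli : 1 - k * p ≤ (1 - p) ^ k := by
    simpa [sub_eq_add_neg] using one_add_mul_le_pow (show (-2 : ℝ) ≤ -p by linarith) k
  have hexpand : (m - k) * (1 - k * p) = m - k - k * p * m + (k : ℝ) ^ 2 * p := by ring
  rw [Nat.cast_sub (by exact_mod_cast hkm)]
  calc τ * m / 2 = τ * (m - m / 2) := by ring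
    _ ≤ τ * ((m - k) * (1 - k * p)) := by
      rw [hexpand]
      gcongr
      linarith [hhalf, mul_nonneg (sq_nonneg (k : ℝ)) hp0]
    _ ≤ τ * ((m - k) * (1 - p) ^ k) := by gcongr
    _ = (m - k) * (τ * (1 - p) ^ k) := by ring

lemma choose_mul_pow_mul_one_sub_pow_le_exp {m k : ℕ} {p τ : ℝ} (hp : p ∈ Set.Icc 0 1)
    (hτ : τ ∈ Set.Icc 0 1) (hk : 2 * k * (8 + p * m) ≤ τ * m) :
    m.choose k * ((k * p + τ) ^ k * (1 - τ * (1 - p) ^ k) ^ (m - k)) ≤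
      Real.exp (-(τ * m / 8)) := by
  have hrate := half_mul_le_sub_mul_one_sub_pow hp hτ hk
  obtain ⟨hp0, hp1⟩ := hp
  obtain ⟨hτ0, hτ1⟩ := hτ
  set q : ℝ := τ * (1 - p) ^ k
  have hq1 : q ≤ 1 := mul_le_one₀ hτ1 (by bound) (by bound)
  have hfour : (4 : ℝ) ^ k ≤ Real.exp (2 * k) := by
    rw [mul_comm, Real.exp_nat_mul]
    exact pow_le_pow_left₀ (by norm_num) four_le_exp_two k
  calc m.choose k * ((k * p + τ) ^ k * (1 - q) ^ (m - k))
      = m.choose k * (k * p + τ) ^ k * (1 - q) ^ (m - k) := by ring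
    _ ≤ 4 ^ k * Real.exp (m * (k * p + τ) / 4) * Real.exp (-((m - k : ℕ) * q)) :=
        mul_le_mul (choose_mul_pow_le_pow_mul_exp m k (by positivity) four_pos)
          (one_sub_pow_le_exp_neg_mul hq1 _) (pow_nonneg (sub_nonneg.2 hq1) _) (by positivity)
    _ ≤ Real.exp (2 * k) * Real.exp (m * (k * p + τ) / 4) * Real.exp (-(τ * m / 2)) := by
        gcongr
    _ = Real.exp (2 * k + m * (k * p + τ) / 4 + -(τ * m / 2)) := by simp only [Real.exp_add]
    _ ≤ Real.exp (-(τ * m / 8)) := by gcongr; linarith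

lemma isLittleO_rpow_one_third_sqrt_log :
    (fun m : ℕ => Real.log m ^ ((1 : ℝ) / 3)) =o[atTop] fun m : ℕ => √(Real.log m) := by
  have hlog : Tendsto (fun m : ℕ => Real.log m) atTop atTop :=
    Real.tendsto_log_atTop.comp tendsto_natCast_atTop_atTop
  have hrpow : (fun x : ℝ => x ^ ((1 : ℝ) / 3)) =o[atTop] fun x : ℝ => √x := by
    refine (isLittleO_iff_tendsto' ?_).2 ?_
    · filter_upwards [eventually_gt_atTop 0] with x hx h
      exact absurd h (Real.sqrt_pos.2 hx).ne'
    · refine (tendsto_rpow_neg_atTop (show (0 : ℝ) < 1 / 6 by norm_num)).congr' ?_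
      filter_upwards [eventually_gt_atTop 0] with x hx
      rw [Real.sqrt_eq_rpow, ← Real.rpow_sub hx]
      norm_num
  exact hrpow.comp_tendsto hlog

end Estimates

theorem integral_ncard_exceptionalSets_le_exp {m k : ℕ} {p τ : ℝ} (hp : p ∈ Set.Icc 0 1)
    (hτ : τ ∈ Set.Icc 0 1) (hk : 2 * k * (8 + p * m) ≤ τ * m) :
    ∫ M, ((exceptionalSets (Matrix.of M) k).ncard : ℝ) ∂(lawLastColumn m p τ) ≤
      Real.exp (-(τ * m / 8)) :=
  (integral_ncard_exceptionalSets_le_choose_mul hp hτ k).trans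
    (choose_mul_pow_mul_one_sub_pow_le_exp hp hτ hk)

lemma eventually_integral_ncard_exceptionalSets_le_exp (K : ℝ) {t κ : ℕ → ℝ}
    (ht : ∀ m, 0 ≤ t m) (hκ : κ =o[atTop] t) :
    ∀ᶠ m : ℕ in atTop, ∀ p τ : ℝ, p * m ∈ Set.Icc 0 K → τ * m ∈ Set.Icc (t m / 2) m →
      ∀ k : ℕ, k ≤ κ m →
        ∫ M, ((exceptionalSets (Matrix.of M) k).ncard : ℝ) ∂(lawLastColumn m p τ) ≤
          Real.exp (-(t m / 16)) := by
  filter_upwards [hκ.def (show 0 < (4 * (8 + |K|))⁻¹ by positivity), eventually_gt_atTop 0,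
    tendsto_natCast_atTop_atTop.eventually_ge_atTop K] with m hκm hm hKm p τ hp hτ k hk
  have hm0 : (0 : ℝ) < m := by exact_mod_cast hm
  have hp01 : p ∈ Set.Icc 0 1 := ⟨nonneg_of_mul_nonneg_left hp.1 hm0,
    (mul_le_iff_le_one_left hm0).1 (hp.2.trans hKm)⟩
  have hτ01 : τ ∈ Set.Icc 0 1 := ⟨nonneg_of_mul_nonneg_left
    ((div_nonneg (ht m) zero_le_two).trans hτ.1) hm0, (mul_le_iff_le_one_left hm0).1 hτ.2⟩
  have hkt : k ≤ (4 * (8 + |K|))⁻¹ * t m := by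
    simpa [abs_of_nonneg (ht m)] using hk.trans ((le_abs_self _).trans hκm)
  have hk_small : 2 * k * (8 + p * m) ≤ τ * m :=
    calc 2 * k * (8 + p * m) ≤ 2 * ((4 * (8 + |K|))⁻¹ * t m) * (8 + |K|) := by
          have hbound0 : 0 ≤ (4 * (8 + |K|))⁻¹ * t m := k.cast_nonneg.trans hkt
          gcongr
          · linarith [hp.1]
          · exact hp.2.trans (le_abs_self K)
      _ = t m / 2 := by field_simp; norm_num
      _ ≤ τ * m := hτ.1
  exact (integral_ncard_exceptionalSets_le_exp hp01 hτ01 hk_small).trans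
    (Real.exp_le_exp.2 (by linarith [hτ.1]))

theorem unique_neighbour_exceptional_column_general (K : ℝ) {t κ : ℕ → ℝ}
    (ht : ∀ m, 0 ≤ t m) (hκ : κ =o[atTop] t) :
    ∃ C : ℝ, 0 < C ∧
      ∀ (m : ℕ) (p τ : ℝ), p * m ∈ Set.Icc 0 K → τ * m ∈ Set.Icc (t m / 2) m →
        ∀ k : ℕ, k ≤ κ m →
          ∫ M, ((exceptionalSets (Matrix.of M) k).ncard : ℝ) ∂(lawLastColumn m p τ) ≤
            C * Real.exp (-(t m / 16)) := by
  obtain ⟨N, hN⟩ :=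
    eventually_atTop.1 (eventually_integral_ncard_exceptionalSets_le_exp K ht hκ)
  obtain ⟨B, hB⟩ := ((Finset.range N).image fun m =>
    2 ^ (m + 1) * (max 1 K ^ m) ^ m / Real.exp (-(t m / 16))).exists_le
  refine ⟨max 1 B, by positivity, fun m p τ hp hτ k hk => ?_⟩
  rcases le_or_gt N m with hNm | hmN
  · calc ∫ M, ((exceptionalSets (Matrix.of M) k).ncard : ℝ) ∂(lawLastColumn m p τ)
        ≤ Real.exp (-(t m / 16)) := hN m hNm p τ hp hτ k hk
      _ ≤ max 1 B * Real.exp (-(t m / 16)) :=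
        le_mul_of_one_le_left (Real.exp_pos _).le (le_max_left 1 B)
  · have hτm : τ * m ∈ Set.Icc 0 (m : ℝ) := ⟨(div_nonneg (ht m) zero_le_two).trans hτ.1, hτ.2⟩
    have hBm : 2 ^ (m + 1) * (max 1 K ^ m) ^ m ≤ B * Real.exp (-(t m / 16)) :=
      (div_le_iff₀ (Real.exp_pos _)).1
        (hB _ (Finset.mem_image_of_mem _ (Finset.mem_range.2 hmN)))
    calc ∫ M, ((exceptionalSets (Matrix.of M) k).ncard : ℝ) ∂(lawLastColumn m p τ)
        ≤ 2 ^ (m + 1) * (max 1 K ^ m) ^ m :=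
          integral_ncard_exceptionalSets_le_two_pow_mul hp hτm k
      _ ≤ B * Real.exp (-(t m / 16)) := hBm
      _ ≤ max 1 B * Real.exp (-(t m / 16)) := by gcongr; exact le_max_right 1 B

theorem unique_neighbour_exceptional_column (δ : ℝ) (hδ : 0 < δ) :
    ∃ C : ℝ, 0 < C ∧
      ∀ (m : ℕ) (p τ : ℝ),
        p * m ∈ Set.Icc (1 + δ) δ⁻¹ →
        τ * m ∈ Set.Icc (Real.sqrt (Real.log m) / 2) (2 * Real.sqrt (Real.log m)) →
        ∀ k : ℕ, (k : ℝ) ≤ (Real.log m) ^ ((1 : ℝ) / 3) →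
          (∫ M, (({S : Finset (Fin (m + 1)) | S.card = k + 1 ∧
                (⟨m, Nat.lt_succ_self m⟩ : Fin (m + 1)) ∈ S ∧
                (uniqueNbrSet (Matrix.of M) S).ncard = 0}).ncard : ℝ)
            ∂(lawLastColumn m p τ)) ≤ C * Real.exp (-(Real.sqrt (Real.log m) / 16)) := by
  obtain ⟨C, hC, hbound⟩ := unique_neighbour_exceptional_column_general δ⁻¹
    (fun m => Real.sqrt_nonneg (Real.log m)) isLittleO_rpow_one_third_sqrt_log
  exact ⟨C, hC, fun m p τ hp hτ => hbound m p τ (Set.Icc_subset_Icc_left (by positivity) hp)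
    (Set.Icc_subset_Icc_right (two_mul_sqrt_log_le m) hτ)⟩
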